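/- For ℓ = 2 (centers are line segments): for every Q ∈ X^d_2 there exist indices 1 ≤ i < j ≤ m such that r_Q ⊆ r_{i,j}, where r_Q ∈ R and r_{i,j} ∈ R̃_2. Consequently, if there exists a set cover of R of size k, then there exists a set cover of R̃_2 of size at most k. -/

import Mathlib

/-!
The set `r_Q` is empty or contains some `z₀`, witnessed by a subcurve `P[t_i, t_j]` within Fréchet
distance `Δ` of the segment `Q`; in the second case this pair `(i, j)` works for all of `r_Q`.
The endpoints of `Q` are within `Δ` of `P(t_i)` and `P(t_j)`, so by convexity `Q` and `τ_{i,j}`,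
both parametrized linearly, are pointwise within `Δ`.

Let `z ∈ r_Q` be witnessed by `P[t_x, t_y]`, and fix a near-optimal matching with `Q`. The points
of `Q` matched to the parameters `t_x ≤ t_z < t_{z+1} ≤ t_y` occur in this order along `Q`, and each
is within `Δ + ε` of its partner. Mapping `π(x, z, z+1, y)` piecewise linearly
(`frechetDist_polyline_seg_le`) shows that it is within `2Δ + ε` of `τ_{i,j}`, for every `ε > 0`.
The condition `x_z ≤ x` asks for `d_F(τ_{x',z}, P[t_{x'}, t_z]) ≤ 4Δ` for `x ≤ x' ≤ z`: the subcurve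
is within `2Δ` of the matched subsegment of `Q`, whose endpoints are within `2Δ` of those of
`τ_{x',z}` (`frechetDist_seg_subcurve_le`). The condition `y ≤ y_z` is symmetric.

Reparametrizations are strictly increasing, so a matching that degenerates (for instance if `x = z`)
is first perturbed by an arbitrarily small amount.
-/

open Set

noncomputable section

/-- Points in `ℝ^d`. -/
abbrev Pt (d : ℕ) : Type := EuclideanSpace ℝ (Fin d)

/-- A reparametrization: a continuous strictly increasing bijection of `[0,1]` onto itself. -/
def IsReparam (γ : ℝ → ℝ) : Prop :=
  ContinuousOn γ (Icc 0 1) ∧ StrictMonoOn γ (Icc 0 1) ∧ γ '' Icc 0 1 = Icc 0 1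

/-- The Fréchet distance `d_F(P,Q) = inf_γ sup_{t ∈ [0,1]} ‖P(γ(t)) - Q(t)‖`
(only the values of the curves on `[0,1]` are relevant). -/
def frechetDist {d : ℕ} (P Q : ℝ → Pt d) : ℝ :=
  ⨅ γ : {γ : ℝ → ℝ // IsReparam γ}, ⨆ s : Icc (0:ℝ) 1, ‖P (γ.1 s.1) - Q s.1‖

/-- The linearly parametrized line segment from `a` to `b`. -/
def seg {d : ℕ} (a b : Pt d) : ℝ → Pt d := fun s => (1 - s) • a + s • b

/-- The subcurve `P[a,b]` of `P`, linearly reparametrized over `[0,1]`. -/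
def subcurve {d : ℕ} (P : ℝ → Pt d) (a b : ℝ) : ℝ → Pt d := fun s => P (a + s * (b - a))

/-- The polygonal curve with vertex sequence `pts 0, …, pts n`, uniformly
parametrized over `[0,1]`. -/
def polyline {d n : ℕ} (pts : Fin (n + 1) → Pt d) : ℝ → Pt d := fun s =>
  if h : n = 0 then pts 0
  else
    let i : ℕ := min ⌊s * n⌋₊ (n - 1)
    have hi : i < n := lt_of_le_of_lt (min_le_right _ _) (by omega)
    (1 - (s * n - i)) • pts ⟨i, hi.trans n.lt_succ_self⟩ +
      (s * n - i) • pts ⟨i + 1, Nat.succ_lt_succ hi⟩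

/-- `f ∈ 𝕏^d_ℓ`: `f` is a polygonal curve with at most `ℓ` vertices. -/
def IsPolygonal {d : ℕ} (f : ℝ → Pt d) (ℓ : ℕ) : Prop :=
  ∃ n : ℕ, n + 1 ≤ ℓ ∧ ∃ pts : Fin (n + 1) → Pt d, f = polyline pts

/-- Concatenation of two curves (each parametrized over `[0,1]`). -/
def concat {d : ℕ} (f g : ℝ → Pt d) : ℝ → Pt d := fun s =>
  if s ≤ 1 / 2 then f (2 * s) else g (2 * s - 1)

/-- `CostLE P m t C Δ` states that the clustering cost satisfies `φ(P,C) ≤ Δ`: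
there is a family `I` of index pairs `(i,j)`, `1 ≤ i < j ≤ m`, with
`⋃_{(i,j) ∈ I} [t i, t j] = [0,1]`, such that every corresponding subcurve is
within Fréchet distance `Δ` of some center in `C`. -/
def CostLE {d : ℕ} (P : ℝ → Pt d) (m : ℕ) (t : ℕ → ℝ) (C : Set (ℝ → Pt d)) (Δ : ℝ) : Prop :=
  ∃ I : Set (ℕ × ℕ),
    (∀ q ∈ I, 1 ≤ q.1 ∧ q.1 < q.2 ∧ q.2 ≤ m) ∧
    (⋃ q ∈ I, Icc (t q.1) (t q.2)) = Icc (0:ℝ) 1 ∧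
    ∀ q ∈ I, ∃ c ∈ C, frechetDist (subcurve P (t q.1) (t q.2)) c ≤ Δ

/-- The set `r_Q` of the set system `R` (ground set `{1,…,m−1}`):
`r_Q = {z : ∃ i ≤ z < j, d_F(Q, P[t_i,t_j]) ≤ Δ}`. -/
def rSet {d : ℕ} (P : ℝ → Pt d) (m : ℕ) (t : ℕ → ℝ) (Δ : ℝ) (Q : ℝ → Pt d) : Set ℕ :=
  {z | 1 ≤ z ∧ z < m ∧ ∃ i j, 1 ≤ i ∧ i ≤ z ∧ z < j ∧ j ≤ m ∧
    frechetDist Q (subcurve P (t i) (t j)) ≤ Δ}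

/-- The set `r_{i,j}` of the set system `R̃₂` (case `ℓ = 2`). -/
def rTilde2 {d : ℕ} (P : ℝ → Pt d) (m : ℕ) (t : ℕ → ℝ) (Δ : ℝ)
    (xz yz : ℕ → ℕ) (i j : ℕ) : Set ℕ :=
  {z | 1 ≤ z ∧ z < m ∧ ∃ x y, xz z ≤ x ∧ x ≤ z ∧ z + 1 ≤ y ∧ y ≤ yz z ∧
    frechetDist (polyline (n := 3) ![P (t x), P (t z), P (t (z+1)), P (t y)])
      (seg (P (t i)) (P (t j))) ≤ 2 * Δ}

/-! ### Reparametrizations and the Fréchet distance -/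

lemma isReparam_of_endpoints {γ : ℝ → ℝ} (hc : ContinuousOn γ (Icc 0 1))
    (hs : StrictMonoOn γ (Icc 0 1)) (h0 : γ 0 = 0) (h1 : γ 1 = 1) : IsReparam γ := by
  refine ⟨hc, hs, Subset.antisymm ?_ ?_⟩
  · rintro _ ⟨x, hx, rfl⟩
    have a := hs.monotoneOn (by simp) hx hx.1
    have b := hs.monotoneOn hx (by simp) hx.2
    rw [h0] at a
    rw [h1] at b
    exact ⟨a, b⟩
  · have := intermediate_value_Icc (zero_le_one (α := ℝ)) hc
    rwa [h0, h1] at this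

lemma IsReparam.mem {γ : ℝ → ℝ} (h : IsReparam γ) {s : ℝ} (hs : s ∈ Icc (0:ℝ) 1) :
    γ s ∈ Icc (0:ℝ) 1 := h.2.2 ▸ mem_image_of_mem γ hs

lemma IsReparam.zero {γ : ℝ → ℝ} (h : IsReparam γ) : γ 0 = 0 := by
  obtain ⟨x, hx, hx0⟩ : (0:ℝ) ∈ γ '' Icc 0 1 := by rw [h.2.2]; simp
  have := h.2.1.monotoneOn (by simp) hx hx.1
  have := (h.mem (s := 0) (by simp)).1
  linarith

lemma IsReparam.one {γ : ℝ → ℝ} (h : IsReparam γ) : γ 1 = 1 := by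
  obtain ⟨x, hx, hx0⟩ : (1:ℝ) ∈ γ '' Icc 0 1 := by rw [h.2.2]; simp
  have := h.2.1.monotoneOn hx (by simp) hx.2
  have := (h.mem (s := 1) (by simp)).2
  linarith

lemma isReparam_id : IsReparam (fun s => s) :=
  isReparam_of_endpoints continuousOn_id (fun _ _ _ _ h => h) rfl rfl

lemma frechetDist_le {d : ℕ} {f g : ℝ → Pt d} {γ : ℝ → ℝ} {c : ℝ} (hγ : IsReparam γ)
    (h : ∀ s ∈ Icc (0:ℝ) 1, ‖f (γ s) - g s‖ ≤ c) : frechetDist f g ≤ c := by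
  have hb : BddBelow (range fun γ : {γ : ℝ → ℝ // IsReparam γ} =>
      ⨆ s : Icc (0:ℝ) 1, ‖f (γ.1 s.1) - g s.1‖) := by
    refine ⟨0, ?_⟩
    rintro _ ⟨γ, rfl⟩
    exact Real.iSup_nonneg fun _ => norm_nonneg _
  have : Nonempty (Icc (0:ℝ) 1) := ⟨⟨0, by simp⟩⟩
  exact (ciInf_le hb ⟨γ, hγ⟩).trans (ciSup_le fun s => h s.1 s.2)

/-- Continuity bounds the supremum over `[0,1]`, so that a small value of `frechetDist` is not the
junk value of an unbounded supremum and yields an actual near-optimal matching. -/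
lemma exists_reparam_of_frechetDist_lt {d : ℕ} {f g : ℝ → Pt d} {c : ℝ}
    (hf : ContinuousOn f (Icc 0 1)) (hg : ContinuousOn g (Icc 0 1)) (h : frechetDist f g < c) :
    ∃ γ, IsReparam γ ∧ ∀ s ∈ Icc (0:ℝ) 1, ‖f (γ s) - g s‖ ≤ c := by
  have : Nonempty {γ : ℝ → ℝ // IsReparam γ} := ⟨⟨_, isReparam_id⟩⟩
  obtain ⟨γ, hγ⟩ := exists_lt_of_ciInf_lt h
  refine ⟨γ.1, γ.2, fun s hs => ?_⟩
  have hcont : ContinuousOn (fun s => ‖f (γ.1 s) - g s‖) (Icc 0 1) :=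
    ((hf.comp γ.2.1 fun s hs => γ.2.mem hs).sub hg).norm
  have hb : BddAbove (range fun s : Icc (0:ℝ) 1 => ‖f (γ.1 s.1) - g s.1‖) := by
    have := isCompact_Icc.bddAbove_image hcont
    rwa [image_eq_range] at this
  exact (le_ciSup hb ⟨s, hs⟩).trans hγ.le

/-! ### Segments and polygonal curves -/

lemma continuous_seg {d : ℕ} (a b : Pt d) : Continuous (seg a b) := by
  unfold seg
  fun_prop

lemma norm_seg_sub_seg_le {d : ℕ} {a b a' b' : Pt d} {c s : ℝ} (hs : s ∈ Icc (0:ℝ) 1)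
    (ha : ‖a - a'‖ ≤ c) (hb : ‖b - b'‖ ≤ c) : ‖seg a b s - seg a' b' s‖ ≤ c := by
  have e : seg a b s - seg a' b' s = (1 - s) • (a - a') + s • (b - b') := by
    unfold seg
    module
  rw [e]
  refine (norm_add_le _ _).trans ?_
  rw [norm_smul, norm_smul, Real.norm_of_nonneg hs.1, Real.norm_of_nonneg (sub_nonneg.2 hs.2)]
  nlinarith [hs.1, hs.2]

/-- A subsegment of a segment, reparametrized linearly. -/
lemma seg_seg {d : ℕ} (a b : Pt d) (p q s : ℝ) :
    seg (seg a b p) (seg a b q) s = seg a b (p + s * (q - p)) := by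
  unfold seg
  module

lemma IsPolygonal.exists_seg {d : ℕ} {Q : ℝ → Pt d} (h : IsPolygonal Q 2) :
    ∃ a b, Q = seg a b := by
  obtain ⟨n, hn, pts, rfl⟩ := h
  obtain rfl | rfl : n = 0 ∨ n = 1 := by omega
  · refine ⟨pts 0, pts 0, ?_⟩
    funext s
    simp only [polyline, seg, dite_true]
    module
  · refine ⟨pts 0, pts 1, ?_⟩
    funext s
    simp [polyline, seg]

lemma polyline_piece {d n : ℕ} (pts : Fin (n + 1) → Pt d) (k : ℕ) (hk : k < n) {x : ℝ}
    (hx : x ∈ Icc (0:ℝ) 1) :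
    polyline pts ((k + x) / n) = seg (pts ⟨k, by omega⟩) (pts ⟨k + 1, by omega⟩) x := by
  have hn : n ≠ 0 := by omega
  have hn' : (n:ℝ) ≠ 0 := by exact_mod_cast hn
  have e : (k + x) / n * n = k + x := by field_simp
  unfold polyline
  simp only [dif_neg hn, e]
  rcases hx.2.lt_or_eq with h | rfl
  · have hf : ⌊(k:ℝ) + x⌋₊ = k := by
      rw [Nat.floor_eq_iff (by have := hx.1; positivity)]
      constructor <;> linarith [hx.1]
    have hmin : min ⌊(k:ℝ) + x⌋₊ (n - 1) = k := by omega
    simp only [hmin, seg, add_sub_cancel_left]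
  · have hf : ⌊(k:ℝ) + 1⌋₊ = k + 1 := by exact_mod_cast Nat.floor_natCast (R := ℝ) (k + 1)
    by_cases hl : k + 1 = n
    · have hmin : min ⌊(k:ℝ) + 1⌋₊ (n - 1) = k := by omega
      simp only [hmin, seg, add_sub_cancel_left]
    · -- here the floor already selects the next edge, evaluated at its starting point
      have hmin : min ⌊(k:ℝ) + 1⌋₊ (n - 1) = k + 1 := by omega
      simp [hmin, seg]

/-- The piecewise linear homeomorphism of `[0,1]` sending `0 < p < q < 1` to `0, 1/3, 2/3, 1`:
each of the three summands runs from `0` to `1` over one of the three intervals. -/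
def threePiece (p q s : ℝ) : ℝ :=
  (min s p / p + (max p (min s q) - p) / (q - p) + (max s q - q) / (1 - q)) / 3

lemma isReparam_threePiece {p q : ℝ} (hp : 0 < p) (hpq : p < q) (hq : q < 1) :
    IsReparam (threePiece p q) := by
  have h1 : 0 < q - p := by linarith
  have h2 : 0 < 1 - q := by linarith
  refine isReparam_of_endpoints ?_ ?_ ?_ ?_
  · refine Continuous.continuousOn ?_
    unfold threePiece
    fun_prop
  · intro a _ b _ hab
    have m1 : min a p / p ≤ min b p / p := by gcongr
    have m2 : (max p (min a q) - p) / (q - p) ≤ (max p (min b q) - p) / (q - p) := by gcongr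
    have m3 : (max a q - q) / (1 - q) ≤ (max b q - q) / (1 - q) := by gcongr
    unfold threePiece
    suffices min a p / p < min b p / p ∨
        (max p (min a q) - p) / (q - p) < (max p (min b q) - p) / (q - p) ∨
        (max a q - q) / (1 - q) < (max b q - q) / (1 - q) by
      rcases this with h | h | h <;> linarith
    rcases lt_or_ge a p with ha | ha
    · left
      gcongr 1
      grind
    rcases lt_or_ge a q with ha' | ha'
    · right; left
      gcongr 2
      grind
    · right; right
      gcongr 2
      grind
  · have e1 : min 0 p = 0 := min_eq_left hp.le
    have e2 : max p (min 0 q) = p := by grind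
    have e3 : max 0 q = q := by grind
    simp [threePiece, e1, e2, e3]
  · have e1 : min 1 p = p := by grind
    have e2 : max p (min 1 q) = q := by grind
    have e3 : max 1 q = 1 := by grind
    rw [threePiece, e1, e2, e3, div_self hp.ne', div_self h1.ne', div_self h2.ne']
    norm_num

lemma frechetDist_polyline_seg_le_of_lt {d : ℕ} {p₀ p₁ p₂ p₃ u v : Pt d} {p q c : ℝ}
    (hp : 0 < p) (hpq : p < q) (hq : q < 1) (h0 : ‖p₀ - u‖ ≤ c) (h1 : ‖p₁ - seg u v p‖ ≤ c)
    (h2 : ‖p₂ - seg u v q‖ ≤ c) (h3 : ‖p₃ - v‖ ≤ c) :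
    frechetDist (polyline (n := 3) ![p₀, p₁, p₂, p₃]) (seg u v) ≤ c := by
  have k1 : 0 < q - p := by linarith
  have k2 : 0 < 1 - q := by linarith
  refine frechetDist_le (isReparam_threePiece hp hpq hq) fun s hs => ?_
  have hu : seg u v 0 = u := by simp [seg]
  have hv : seg u v 1 = v := by simp [seg]
  rcases le_total s p with hsp | hsp
  · have e1 : min s p = s := min_eq_left hsp
    have e2 : max p (min s q) = p := by grind
    have e3 : max s q = q := by grind
    have hx : s / p ∈ Icc (0:ℝ) 1 := ⟨div_nonneg hs.1 hp.le, (div_le_one hp).2 hsp⟩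
    have e : threePiece p q s = (((0:ℕ):ℝ) + s / p) / (3:ℕ) := by
      simp [threePiece, e1, e2, e3]
    rw [e, polyline_piece _ 0 (by norm_num) hx]
    have e' : seg u v s = seg (seg u v 0) (seg u v p) (s / p) := by
      rw [seg_seg]
      congr 1
      field_simp
      ring
    rw [e', hu]
    exact norm_seg_sub_seg_le hx h0 h1
  rcases le_total s q with hsq | hsq
  · have e1 : min s p = p := min_eq_right hsp
    have e2 : max p (min s q) = s := by grind
    have e3 : max s q = q := by grind
    have hx : (s - p) / (q - p) ∈ Icc (0:ℝ) 1 :=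
      ⟨div_nonneg (by linarith) k1.le, (div_le_one k1).2 (by linarith)⟩
    have e : threePiece p q s = (((1:ℕ):ℝ) + (s - p) / (q - p)) / (3:ℕ) := by
      simp [threePiece, e1, e2, e3, hp.ne']
    rw [e, polyline_piece _ 1 (by norm_num) hx]
    have e' : seg u v s = seg (seg u v p) (seg u v q) ((s - p) / (q - p)) := by
      rw [seg_seg, div_mul_cancel₀ _ k1.ne']
      congr 1
      ring
    rw [e']
    exact norm_seg_sub_seg_le hx h1 h2
  · have e1 : min s p = p := min_eq_right hsp
    have e2 : max p (min s q) = q := by grind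
    have e3 : max s q = s := by grind
    have hx : (s - q) / (1 - q) ∈ Icc (0:ℝ) 1 :=
      ⟨div_nonneg (by linarith) k2.le, (div_le_one k2).2 (by linarith [hs.2])⟩
    have e : threePiece p q s = (((2:ℕ):ℝ) + (s - q) / (1 - q)) / (3:ℕ) := by
      rw [threePiece, e1, e2, e3, div_self hp.ne', div_self k1.ne']
      norm_num
    rw [e, polyline_piece _ 2 (by norm_num) hx]
    have e' : seg u v s = seg (seg u v q) (seg u v 1) ((s - q) / (1 - q)) := by
      rw [seg_seg, div_mul_cancel₀ _ k2.ne']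
      congr 1
      ring
    rw [e', hv]
    exact norm_seg_sub_seg_le hx h2 h3

/-- A polyline whose four vertices are `c`-close to points of a segment occurring in the same
(not necessarily strict) order, with extreme vertices close to the endpoints, is `c`-close to the
segment. -/
lemma frechetDist_polyline_seg_le {d : ℕ} {p₀ p₁ p₂ p₃ u v : Pt d} {p q c : ℝ}
    (hp : 0 ≤ p) (hpq : p ≤ q) (hq : q ≤ 1) (h0 : ‖p₀ - u‖ ≤ c) (h1 : ‖p₁ - seg u v p‖ ≤ c)
    (h2 : ‖p₂ - seg u v q‖ ≤ c) (h3 : ‖p₃ - v‖ ≤ c) :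
    frechetDist (polyline (n := 3) ![p₀, p₁, p₂, p₃]) (seg u v) ≤ c := by
  refine le_of_forall_pos_le_add fun ε hε => ?_
  -- moving `p` and `q` by a fraction `η` towards `1/3` and `2/3` makes all inequalities strict
  obtain ⟨η, hη0, hη1, hη⟩ : ∃ η : ℝ, 0 < η ∧ η < 1 ∧ η * ‖v - u‖ ≤ ε := by
    have hd : 0 < ‖v - u‖ + 1 := by positivity
    refine ⟨min (1 / 2) (ε / (‖v - u‖ + 1)), by positivity,
      (min_le_left _ _).trans_lt (by norm_num), ?_⟩
    have h := min_le_right (1 / 2) (ε / (‖v - u‖ + 1))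
    calc _ ≤ ε / (‖v - u‖ + 1) * (‖v - u‖ + 1) := by gcongr; linarith
      _ = ε := div_mul_cancel₀ _ hd.ne'
  have key : ∀ (w : Pt d) (r r' : ℝ), 0 ≤ r → r ≤ 1 → 0 ≤ r' → r' ≤ 1 → ‖w - seg u v r‖ ≤ c →
      ‖w - seg u v ((1 - η) * r + η * r')‖ ≤ c + ε := by
    intro w r r' hr hr1 hr' hr1' hw
    have e : w - seg u v ((1 - η) * r + η * r') =
        (w - seg u v r) + (η * (r - r')) • (v - u) := by
      unfold seg
      module
    rw [e]
    refine (norm_add_le _ _).trans (add_le_add hw ?_)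
    rw [norm_smul, norm_mul, Real.norm_of_nonneg hη0.le]
    refine le_trans ?_ hη
    have : ‖r - r'‖ ≤ 1 := by
      rw [Real.norm_eq_abs, abs_le]
      constructor <;> linarith
    have : η * ‖r - r'‖ ≤ η := by nlinarith
    gcongr
  refine frechetDist_polyline_seg_le_of_lt (p := (1 - η) * p + η * (1 / 3))
    (q := (1 - η) * q + η * (2 / 3)) ?_ ?_ ?_ (by linarith)
    (key _ _ _ hp (by linarith) (by norm_num) (by norm_num) h1)
    (key _ _ _ (by linarith) hq (by norm_num) (by norm_num) h2) (by linarith)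
  all_goals nlinarith

/-- If `Q = seg a b` is matched to `P[A,B]` within `c`, then any subcurve of `P[A,B]` is within
`2c` of the segment joining its endpoints: compare both with the matched subsegment of `Q`. -/
lemma frechetDist_seg_subcurve_le {d : ℕ} {P : ℝ → Pt d} {a b : Pt d} {A B c : ℝ} {γ : ℝ → ℝ}
    (hγ : IsReparam γ) (hc : 0 ≤ c)
    (h : ∀ s ∈ Icc (0:ℝ) 1, ‖seg a b (γ s) - subcurve P A B s‖ ≤ c)
    {x z : ℝ} (hAx : A ≤ x) (hxz : x ≤ z) (hzB : z ≤ B) :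
    frechetDist (seg (P x) (P z)) (subcurve P x z) ≤ 2 * c := by
  rcases hxz.eq_or_lt with rfl | hlt
  · refine frechetDist_le isReparam_id fun s _ => ?_
    have e : seg (P x) (P x) s = P x := by
      unfold seg
      module
    simp [e, subcurve, hc]
  have hAB : 0 < B - A := by linarith
  set σ : ℝ → ℝ := fun w => (w - A) / (B - A) with hσ
  have hσm : ∀ w, A ≤ w → w ≤ B → σ w ∈ Icc (0:ℝ) 1 := fun w h1 h2 =>
    ⟨div_nonneg (by linarith) hAB.le, (div_le_one hAB).2 (by linarith)⟩
  have hσlt : ∀ w w', w < w' → σ w < σ w' := fun w w' h => by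
    simp only [hσ]
    gcongr
  have hclose : ∀ w, A ≤ w → w ≤ B → ‖seg a b (γ (σ w)) - P w‖ ≤ c := by
    intro w h1 h2
    have := h _ (hσm w h1 h2)
    have e : A + σ w * (B - A) = w := by
      simp only [hσ]
      rw [div_mul_cancel₀ _ hAB.ne']
      ring
    rwa [subcurve, e] at this
  have hmem : ∀ s ∈ Icc (0:ℝ) 1, x ≤ x + s * (z - x) ∧ x + s * (z - x) ≤ z := by
    intro s hs
    constructor <;> nlinarith [hs.1, hs.2]
  have hxm := hσm x hAx (by linarith)
  have hzm := hσm z (by linarith) hzB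
  have hpos : 0 < γ (σ z) - γ (σ x) := sub_pos.2 (hγ.2.1 hxm hzm (hσlt _ _ hlt))
  have hrep : IsReparam fun s => (γ (σ (x + s * (z - x))) - γ (σ x)) / (γ (σ z) - γ (σ x)) := by
    refine isReparam_of_endpoints ?_ ?_ ?_ ?_
    · refine ContinuousOn.div_const (ContinuousOn.sub (hγ.1.comp ?_ ?_) continuousOn_const) _
      · refine Continuous.continuousOn ?_
        simp only [hσ]
        fun_prop
      · intro s hs
        have := hmem s hs
        exact hσm _ (by linarith) (by linarith)
    · intro s hs s' hs' hss
      have m1 := hmem s hs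
      have m2 := hmem s' hs'
      have : γ (σ (x + s * (z - x))) < γ (σ (x + s' * (z - x))) :=
        hγ.2.1 (hσm _ (by linarith) (by linarith)) (hσm _ (by linarith) (by linarith))
          (hσlt _ _ (by nlinarith))
      dsimp only
      gcongr
    · simp
    · simp [hpos.ne']
  refine frechetDist_le hrep fun s hs => ?_
  have m1 := hmem s hs
  set w := x + s * (z - x) with hw
  set r := (γ (σ w) - γ (σ x)) / (γ (σ z) - γ (σ x)) with hr
  have e1 : seg (seg a b (γ (σ x))) (seg a b (γ (σ z))) r = seg a b (γ (σ w)) := by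
    rw [seg_seg, hr, div_mul_cancel₀ _ hpos.ne']
    congr 1
    ring
  have d1 : ‖seg (P x) (P z) r - seg a b (γ (σ w))‖ ≤ c := by
    rw [← e1]
    refine norm_seg_sub_seg_le (hrep.mem hs) ?_ ?_
    · rw [norm_sub_rev]
      exact hclose x hAx (by linarith)
    · rw [norm_sub_rev]
      exact hclose z (by linarith) hzB
  have d2 := hclose w (by linarith) (by linarith)
  have : seg (P x) (P z) r - subcurve P x z s =
      (seg (P x) (P z) r - seg a b (γ (σ w))) + (seg a b (γ (σ w)) - P w) := by
    simp [subcurve, hw]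
  rw [this]
  exact (norm_add_le _ _).trans (by linarith)

/-- A matching `γ` of a segment with `P[A,B]`, rewritten as a monotone map `ρ` from `[A,B]` to
`[0,1]`, so that it is indexed by the parameter of `P` itself. -/
lemma exists_matching {d : ℕ} {P : ℝ → Pt d} {a b : Pt d} {A B c : ℝ} {γ : ℝ → ℝ}
    (hγ : IsReparam γ) (hAB : A < B)
    (h : ∀ s ∈ Icc (0:ℝ) 1, ‖seg a b (γ s) - subcurve P A B s‖ ≤ c) :
    ∃ ρ : ℝ → ℝ, ρ A = 0 ∧ ρ B = 1 ∧ MonotoneOn ρ (Icc A B) ∧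
      ∀ w ∈ Icc A B, ‖seg a b (ρ w) - P w‖ ≤ c := by
  have hpos : 0 < B - A := by linarith
  have hm : ∀ w ∈ Icc A B, (w - A) / (B - A) ∈ Icc (0:ℝ) 1 := fun w hw =>
    ⟨div_nonneg (by linarith [hw.1]) hpos.le, (div_le_one hpos).2 (by linarith [hw.2])⟩
  refine ⟨fun w => γ ((w - A) / (B - A)), ?_, ?_, ?_, ?_⟩
  · simp [hγ.zero]
  · simp [hpos.ne', hγ.one]
  · intro w hw w' hw' hww
    exact hγ.2.1.monotoneOn (hm w hw) (hm w' hw') (by gcongr)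
  · intro w hw
    have := h _ (hm w hw)
    have e : A + (w - A) / (B - A) * (B - A) = w := by
      rw [div_mul_cancel₀ _ hpos.ne']
      ring
    rwa [subcurve, e] at this

/-! ### The comparison of the two set systems -/

/-- (`ℓ = 2`) For every `Q ∈ 𝕏^d_2` there are indices `1 ≤ i < j ≤ m`
with `r_Q ⊆ r_{i,j} ∈ R̃₂`; consequently a set cover of `R` of size `k` yields a set
cover of `R̃₂` of size at most `k`. -/
theorem stmt8 {d : ℕ} (P : ℝ → Pt d) (hP : ContinuousOn P (Icc 0 1))
    (m : ℕ) (hm : 2 ≤ m) (t : ℕ → ℝ) (ht0 : t 1 = 0) (ht1 : t m = 1)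
    (htmono : ∀ i, 1 ≤ i → i < m → t i < t (i + 1))
    (Δ : ℝ) (hΔ : 0 < Δ) (xz yz : ℕ → ℕ)
    (hxz : ∀ z, 1 ≤ z → z < m →
      IsLeast {x | 1 ≤ x ∧ x ≤ z ∧ ∀ x', x ≤ x' → x' ≤ z →
        frechetDist (seg (P (t x')) (P (t z))) (subcurve P (t x') (t z)) ≤ 4 * Δ} (xz z))
    (hyz : ∀ z, 1 ≤ z → z < m →
      IsGreatest {y | z + 1 ≤ y ∧ y ≤ m ∧ ∀ y', z + 1 ≤ y' → y' ≤ y →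
        frechetDist (seg (P (t (z+1))) (P (t y'))) (subcurve P (t (z+1)) (t y')) ≤ 4 * Δ}
        (yz z)) :
    (∀ Q, IsPolygonal Q 2 → ∃ i j, 1 ≤ i ∧ i < j ∧ j ≤ m ∧
      rSet P m t Δ Q ⊆ rTilde2 P m t Δ xz yz i j) ∧
    ∀ (k : ℕ) (Qc : Fin k → ℝ → Pt d), (∀ s, IsPolygonal (Qc s) 2) →
      (∀ z, 1 ≤ z → z < m → ∃ s, z ∈ rSet P m t Δ (Qc s)) →
      ∃ ij : Fin k → ℕ × ℕ,
        (∀ s, 1 ≤ (ij s).1 ∧ (ij s).1 < (ij s).2 ∧ (ij s).2 ≤ m) ∧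
        ∀ z, 1 ≤ z → z < m → ∃ s, z ∈ rTilde2 P m t Δ xz yz (ij s).1 (ij s).2 := by
  have hmono : ∀ i j, 1 ≤ i → i ≤ j → j ≤ m → t i ≤ t j := by
    intro i j hi hij
    induction j, hij using Nat.le_induction with
    | base => exact fun _ => le_rfl
    | succ j hj ih => exact fun hjm => (ih (by omega)).trans (htmono j (by omega) (by omega)).le
  have hlt : ∀ i j, 1 ≤ i → i < j → j ≤ m → t i < t j := fun i j hi hij hjm =>
    (htmono i hi (by omega)).trans_le (hmono _ _ (by omega) hij hjm)
  have hsub : ∀ i j, 1 ≤ i → i < j → j ≤ m →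
      ContinuousOn (subcurve P (t i) (t j)) (Icc 0 1) := by
    intro i j hi hij hjm
    have h1 := hmono 1 i le_rfl hi (by omega)
    have h2 := hmono j m (by omega) hjm le_rfl
    have h3 := hlt i j hi hij hjm
    refine hP.comp (Continuous.continuousOn (by fun_prop)) fun s hs => ?_
    constructor <;> nlinarith [hs.1, hs.2]
  have main : ∀ Q, IsPolygonal Q 2 → ∃ i j, 1 ≤ i ∧ i < j ∧ j ≤ m ∧
      rSet P m t Δ Q ⊆ rTilde2 P m t Δ xz yz i j := by
    intro Q hQ
    obtain ⟨a, b, rfl⟩ := hQ.exists_seg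
    rcases (rSet P m t Δ (seg a b)).eq_empty_or_nonempty with hem | ⟨z₀, _, _, i, j, hi, hiz, hzj,
      hjm, hF⟩
    · exact ⟨1, 2, le_rfl, by norm_num, hm, by simp [hem]⟩
    have hmatch : ∀ i j, 1 ≤ i → i < j → j ≤ m →
        frechetDist (seg a b) (subcurve P (t i) (t j)) ≤ Δ → ∀ ε : ℝ, 0 < ε →
        ∃ γ, IsReparam γ ∧
          ∀ s ∈ Icc (0:ℝ) 1, ‖seg a b (γ s) - subcurve P (t i) (t j) s‖ ≤ Δ + ε :=
      fun i j hi hij hjm hF ε hε => exists_reparam_of_frechetDist_lt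
        (continuous_seg a b).continuousOn (hsub i j hi hij hjm) (by linarith)
    refine ⟨i, j, hi, by omega, hjm, ?_⟩
    rintro z ⟨hz1, hzm, x, y, hx, hxz', hzy, hym, hFz⟩
    -- a matching within `2Δ` is enough for the constraints `x_z ≤ x` and `y ≤ y_z`
    obtain ⟨γ, hγ, hγc⟩ := hmatch x y hx (by omega) hym hFz Δ hΔ
    refine ⟨hz1, hzm, x, y, (hxz z hz1 hzm).2 ⟨hx, hxz', fun x' h1 h2 => ?_⟩, hxz', hzy,
      (hyz z hz1 hzm).2 ⟨hzy, hym, fun y' h1 h2 => ?_⟩, ?_⟩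
    · have := frechetDist_seg_subcurve_le hγ (by linarith) hγc (hmono x x' hx h1 (by omega))
        (hmono x' z (by omega) h2 (by omega)) (hmono z y (by omega) (by omega) hym)
      linarith
    · have := frechetDist_seg_subcurve_le hγ (by linarith) hγc
        (hmono x (z + 1) hx (by omega) (by omega))
        (hmono (z + 1) y' (by omega) h1 (by omega)) (hmono y' y (by omega) (by omega) hym)
      linarith
    refine le_of_forall_pos_le_add fun ε hε => ?_
    obtain ⟨γ₁, hγ₁, hc₁⟩ := hmatch i j hi (by omega) hjm hF (ε / 2) (by linarith)
    obtain ⟨γ₂, hγ₂, hc₂⟩ := hmatch x y hx (by omega) hym hFz (ε / 2) (by linarith)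
    obtain ⟨ρ₁, h₁0, h₁1, -, h₁⟩ := exists_matching hγ₁ (hlt i j hi (by omega) hjm) hc₁
    obtain ⟨ρ, h0, h1, hρ, hd⟩ := exists_matching hγ₂ (hlt x y hx (by omega) hym) hc₂
    have hij := hlt i j hi (by omega) hjm
    have hxz₁ := hmono x z hx hxz' (by omega)
    have hzz := hmono z (z + 1) hz1 (by omega) (by omega)
    have hzy₁ := hmono (z + 1) y (by omega) hzy hym
    have ma : t x ∈ Icc (t x) (t y) := ⟨le_rfl, by linarith⟩
    have mb : t z ∈ Icc (t x) (t y) := ⟨by linarith, by linarith⟩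
    have mc : t (z + 1) ∈ Icc (t x) (t y) := ⟨by linarith, by linarith⟩
    have md : t y ∈ Icc (t x) (t y) := ⟨by linarith, le_rfl⟩
    have e0 : seg a b 0 = a := by simp [seg]
    have e1 : seg a b 1 = b := by simp [seg]
    have hu := h₁ (t i) ⟨le_rfl, hij.le⟩
    have hv := h₁ (t j) ⟨hij.le, le_rfl⟩
    rw [h₁0, e0] at hu
    rw [h₁1, e1] at hv
    have r0 : 0 ≤ ρ (t z) := h0 ▸ hρ ma mb hxz₁
    have r1 : ρ (t z) ≤ ρ (t (z + 1)) := hρ mb mc hzz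
    have r2 : ρ (t (z + 1)) ≤ 1 := h1 ▸ hρ mc md hzy₁
    have tri : ∀ w ∈ Icc (t x) (t y), ρ w ∈ Icc (0:ℝ) 1 →
        ‖P w - seg (P (t i)) (P (t j)) (ρ w)‖ ≤ 2 * Δ + ε := by
      intro w hw hr
      have q1 := hd w hw
      have q2 := norm_seg_sub_seg_le hr hu hv
      rw [norm_sub_rev] at q1
      have := norm_sub_le_norm_sub_add_norm_sub (P w) (seg a b (ρ w))
        (seg (P (t i)) (P (t j)) (ρ w))
      linarith
    have t0 := tri _ ma (by simp [h0])
    have t3 := tri _ md (by simp [h1])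
    rw [h0] at t0
    rw [h1] at t3
    exact frechetDist_polyline_seg_le r0 r1 r2 (by simpa [seg] using t0)
      (tri _ mb ⟨r0, r1.trans r2⟩) (tri _ mc ⟨r0.trans r1, r2⟩) (by simpa [seg] using t3)
  refine ⟨main, fun k Qc hQc hcov => ?_⟩
  choose i j hi hij hjm hsubs using fun s => main (Qc s) (hQc s)
  refine ⟨fun s => (i s, j s), fun s => ⟨hi s, hij s, hjm s⟩, fun z h1 h2 => ?_⟩
  obtain ⟨s, hs⟩ := hcov z h1 h2
  exact ⟨s, hsubs s hs⟩
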